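/- arXiv:2104.14998 — 2 statements merged into one kernel-verified Lean document; each statement's English description precedes it below -/
import Mathlib

section
/- Let V be a finite-dimensional complex vector space with a symmetric bilinear form q, and let 𝔖 be a set of endomorphisms of V each of which is skew-adjoint with respect to q (q(Au, w) = -q(u, Aw) for all u, w). Fix f ∈ V and define the critical space H_f as the q-orthogonal complement of the subspace spanned by {A f : A ∈ 𝔖}. If x ∈ V satisfies q(Ax, x - f) = 0 for every A ∈ 𝔖, then x ∈ H_f, i.e. q(x - f, Af) = 0 and hence q(x, Af) = 0 for all A ∈ 𝔖. Moreover f itself lies in H_f. -/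
section CriticalSpace

variable {R M : Type*} [CommSemiring R] [AddCommMonoid M] [Module R M]

theorem mem_orthogonal_span_iff {q : LinearMap.BilinForm R M} {s : Set M} {x : M} :
    x ∈ q.orthogonal (Submodule.span R s) ↔ ∀ y ∈ s, q y x = 0 :=
  Submodule.span_le (p := LinearMap.ker (q.flip x))

/-- The critical space `H_f` of a set `S` of endomorphisms: the `q`-orthogonal complement of the
span of `{A f | A ∈ S}`. As in `LinearMap.BilinForm.orthogonal`, its elements are the right
arguments of `q`; for symmetric `q` the side is immaterial. -/
def criticalSpace (q : LinearMap.BilinForm R M) (S : Set (Module.End R M)) (f : M) :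
    Submodule R M :=
  q.orthogonal (Submodule.span R ((fun A : Module.End R M => A f) '' S))

theorem mem_criticalSpace_iff {q : LinearMap.BilinForm R M} (hq : q.IsRefl)
    {S : Set (Module.End R M)} {f x : M} :
    x ∈ criticalSpace q S f ↔ ∀ A ∈ S, q x (A f) = 0 := by
  rw [criticalSpace, mem_orthogonal_span_iff, Set.forall_mem_image]
  exact forall₂_congr fun A _ => hq.eq_iff

end CriticalSpace

section SkewAdjoint

variable {R M : Type*} [CommRing R] [AddCommGroup M] [Module R M]
  {q : LinearMap.BilinForm R M} {A : Module.End R M} {S : Set (Module.End R M)}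

theorem apply_left_eq_neg_of_isSkewAdjoint (hA : LinearMap.IsSkewAdjoint q A) (u w : M) :
    q (A u) w = -q u (A w) :=
  (hA u w).trans (map_neg (q u) (A w))

theorem apply_self_eq_zero_of_isSkewAdjoint (h2 : IsLeftRegular (2 : R)) (hq : q.IsSymm)
    (hA : LinearMap.IsSkewAdjoint q A) (u : M) : q u (A u) = 0 := by
  have hneg : q u (A u) = -q u (A u) :=
    (hq.eq u (A u)).trans (apply_left_eq_neg_of_isSkewAdjoint hA u u)
  refine h2.mul_left_eq_zero_iff.mp ?_
  rw [two_mul]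
  exact eq_neg_iff_add_eq_zero.mp hneg

theorem apply_left_sub_eq_of_isSkewAdjoint (h2 : IsLeftRegular (2 : R)) (hq : q.IsSymm)
    (hA : LinearMap.IsSkewAdjoint q A) (f x : M) : q (A x) (x - f) = q x (A f) := by
  rw [apply_left_eq_neg_of_isSkewAdjoint hA, map_sub, map_sub,
    apply_self_eq_zero_of_isSkewAdjoint h2 hq hA, zero_sub, neg_neg]

theorem sub_apply_eq_of_isSkewAdjoint (h2 : IsLeftRegular (2 : R)) (hq : q.IsSymm)
    (hA : LinearMap.IsSkewAdjoint q A) (f x : M) : q (x - f) (A f) = q x (A f) := by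
  rw [map_sub, LinearMap.sub_apply, apply_self_eq_zero_of_isSkewAdjoint h2 hq hA, sub_zero]

theorem mem_criticalSpace_iff_apply_sub_eq_zero (h2 : IsLeftRegular (2 : R)) (hq : q.IsSymm)
    (hS : ∀ A ∈ S, LinearMap.IsSkewAdjoint q A) {f x : M} :
    x ∈ criticalSpace q S f ↔ ∀ A ∈ S, q (A x) (x - f) = 0 := by
  rw [mem_criticalSpace_iff hq.isRefl]
  exact forall₂_congr fun A hA => by rw [apply_left_sub_eq_of_isSkewAdjoint h2 hq (hS A hA)]

theorem self_mem_criticalSpace (h2 : IsLeftRegular (2 : R)) (hq : q.IsSymm)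
    (hS : ∀ A ∈ S, LinearMap.IsSkewAdjoint q A) (f : M) : f ∈ criticalSpace q S f :=
  (mem_criticalSpace_iff hq.isRefl).mpr fun A hA =>
    apply_self_eq_zero_of_isSkewAdjoint h2 hq (hS A hA) f

theorem critical_points_lie_in_critical_space_general (h2 : IsLeftRegular (2 : R))
    (hq : q.IsSymm) (hS : ∀ A ∈ S, LinearMap.IsSkewAdjoint q A) {f x : M}
    (hx : ∀ A ∈ S, q (A x) (x - f) = 0) :
    x ∈ criticalSpace q S f ∧
    (∀ A ∈ S, q (x - f) (A f) = 0) ∧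
    (∀ A ∈ S, q x (A f) = 0) ∧
    f ∈ criticalSpace q S f := by
  have hmem : x ∈ criticalSpace q S f :=
    (mem_criticalSpace_iff_apply_sub_eq_zero h2 hq hS).mpr hx
  have hortho : ∀ A ∈ S, q x (A f) = 0 := (mem_criticalSpace_iff hq.isRefl).mp hmem
  exact ⟨hmem,
    fun A hA => (sub_apply_eq_of_isSkewAdjoint h2 hq (hS A hA) f x).trans (hortho A hA),
    hortho, self_mem_criticalSpace h2 hq hS f⟩

end SkewAdjoint

/-- Theorem 2, parts (1) and (3): if every `A ∈ 𝔖` is skew-adjoint with respect to the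
symmetric bilinear form `q` and `x` satisfies the criticality condition
`q (A x) (x - f) = 0` for all `A ∈ 𝔖`, then `x` lies in the critical space
`H_f = (𝔖 · f)^⊥`; moreover `f` itself lies in `H_f`. -/
theorem critical_points_lie_in_critical_space
    {V : Type*} [AddCommGroup V] [Module ℂ V] [FiniteDimensional ℂ V]
    (q : LinearMap.BilinForm ℂ V) (hq : q.IsSymm)
    (S : Set (Module.End ℂ V))
    (hS : ∀ A ∈ S, ∀ u w : V, q (A u) w = - q u (A w))
    (f x : V)
    (hx : ∀ A ∈ S, q (A x) (x - f) = 0) :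
    x ∈ q.orthogonal (Submodule.span ℂ ((fun A : Module.End ℂ V => A f) '' S)) ∧
    (∀ A ∈ S, q (x - f) (A f) = 0) ∧
    (∀ A ∈ S, q x (A f) = 0) ∧
    f ∈ q.orthogonal (Submodule.span ℂ ((fun A : Module.End ℂ V => A f) '' S)) := by
  exact critical_points_lie_in_critical_space_general (IsRegular.of_ne_zero two_ne_zero).left hq
    (fun A hA u w => (hS A hA u w).trans (map_neg (q u) (A w)).symm) hx
end

section
/- Let W be an (n+1)-dimensional complex vector space and let A : W → W be a linear endomorphism having n+1 distinct eigenvalues. Then the number of complete flags invariant under A — that is, the number of chains of subspaces L₁ ⊂ L₂ ⊂ … ⊂ L_n of W with dim L_i = i, L_i ⊆ L_{i+1}, and A(L_i) ⊆ L_i for all i — is exactly (n+1)!. -/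
/-!
In a basis `b` of eigenvectors of `A` with distinct eigenvalues, Lagrange interpolation of the
eigenvalues yields polynomials in `A` that project onto the lines `K ∙ b i`. Hence every
`A`-invariant subspace is spanned by the basis vectors it contains, and the lattice of invariant
subspaces is the lattice of subsets of the index type `ι`. Flags `L₁ ⊂ ⋯ ⊂ L_k` with
`dim L_i = i` thereby become chains of subsets with one new index at each step, that is, injective
sequences of length `k` in `ι`; for `k = n` and `|ι| = n + 1` there are `(n + 1)!` of these.
-/

open Function Module Set
open Submodule (span)

section Chain

variable {α : Type*} {k : ℕ}

theorem eq_of_image_Iic_eq {β : Type*} [PartialOrder β] [WellFoundedLT β] {f g : β → α}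
    (hf : Injective f) (h : ∀ i, f '' Iic i = g '' Iic i) : f = g := by
  funext i
  induction i using WellFoundedLT.induction with
  | ind i ih =>
    obtain ⟨j, hji : j ≤ i, hj : g j = f i⟩ := h i ▸ mem_image_of_mem f self_mem_Iic
    obtain hlt | rfl := hji.lt_or_eq
    · exact absurd (hf ((ih j hlt).trans hj)) hlt.ne
    · exact hj.symm

theorem ncard_image_Iic {f : Fin k → α} (hf : Injective f) (i : Fin k) :
    (f '' Iic i).ncard = i + 1 := by
  rw [ncard_image_of_injective _ hf, ← Finset.coe_Iic, ncard_coe_finset, Fin.card_Iic]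

theorem exists_mem_forall_lt_notMem {S : Fin k → Set α} (hne : ∀ i, (S i).Nonempty)
    (hS : StrictMono S) (i : Fin k) : ∃ x ∈ S i, ∀ j < i, x ∉ S j := by
  obtain ⟨_ | m, hm⟩ := i
  · obtain ⟨x, hx⟩ := hne ⟨0, hm⟩
    exact ⟨x, hx, fun j hj => absurd hj (Nat.not_lt_zero j)⟩
  · let pred : Fin k := ⟨m, Nat.lt_of_succ_lt hm⟩
    have hpred : pred < ⟨m + 1, hm⟩ := Nat.lt_succ_self m
    obtain ⟨x, hx, hx'⟩ := exists_of_ssubset (hS hpred)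
    exact ⟨x, hx, fun j hj hxj => hx' (hS.monotone (Nat.le_of_lt_succ hj) hxj)⟩

theorem exists_injective_image_Iic_eq {S : Fin k → Set α} (hcard : ∀ i, (S i).ncard = i + 1)
    (hS : Monotone S) : ∃ f : Fin k → α, Injective f ∧ ∀ i, f '' Iic i = S i := by
  have hne (i : Fin k) : (S i).Nonempty := nonempty_of_ncard_ne_zero (by simp [hcard])
  have hfin (i : Fin k) : (S i).Finite := finite_of_ncard_ne_zero (by simp [hcard])
  have hinj : Injective S := fun i j h => Fin.ext (by simpa [hcard] using congrArg ncard h)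
  choose f hmem hnotMem using exists_mem_forall_lt_notMem hne (hS.strictMono_of_injective hinj)
  have hf : Injective f := .of_lt_imp_ne fun i j hij h => hnotMem j i hij (h ▸ hmem i)
  refine ⟨f, hf, fun i => eq_of_subset_of_ncard_le ?_ ?_ (hfin i)⟩
  · rintro _ ⟨j, hj, rfl⟩
    exact hS hj (hmem j)
  · rw [hcard, ncard_image_Iic hf]

theorem card_chains_ncard_eq_add_one [Fintype α] :
    Nat.card {S : Fin k → Set α // (∀ i, (S i).ncard = i + 1) ∧ Monotone S} =
      (Fintype.card α).descFactorial k := by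
  let initialSegments (f : Fin k ↪ α) :
      {S : Fin k → Set α // (∀ i, (S i).ncard = i + 1) ∧ Monotone S} :=
    ⟨fun i => f '' Iic i, ncard_image_Iic f.injective,
      fun _ _ hij => image_mono (Iic_subset_Iic.2 hij)⟩
  have hbij : Bijective initialSegments := by
    constructor
    · intro f g h
      exact DFunLike.coe_injective
        (eq_of_image_Iic_eq f.injective (congrFun (congrArg Subtype.val h)))
    · rintro ⟨S, hcard, hS⟩
      obtain ⟨f, hf, hfS⟩ := exists_injective_image_Iic_eq hcard hS
      exact ⟨⟨f, hf⟩, Subtype.ext (funext hfS)⟩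
  classical
  rw [← Nat.card_eq_of_bijective _ hbij, Nat.card_eq_fintype_card, Fintype.card_embedding_eq,
    Fintype.card_fin]

end Chain

section Span

variable {R M ι : Type*} [Ring R] [AddCommGroup M] [Module R M]

theorem finrank_span_image_of_linearIndepOn [StrongRankCondition R] {v : ι → M} {s : Set ι}
    (hs : LinearIndepOn R v s) : finrank R (span R (v '' s)) = s.ncard := by
  rw [finrank, ← Cardinal.toNat_toENat, toENat_rank_span_set hs, ncard]

theorem span_image_basis_le_iff [Nontrivial R] (b : Basis ι R M) {s t : Set ι} :
    span R (b '' s) ≤ span R (b '' t) ↔ s ⊆ t := by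
  simp [Submodule.span_le, Set.subset_def]

end Span

theorem span_image_mem_invtSubmodule {R M ι : Type*} [CommRing R] [AddCommGroup M]
    [Module R M] {f : End R M} {v : ι → M} {μ : ι → R}
    (hv : ∀ i, f.HasEigenvector (μ i) (v i)) (s : Set ι) :
    span R (v '' s) ∈ f.invtSubmodule := by
  rw [End.mem_invtSubmodule, Submodule.span_le]
  rintro _ ⟨i, hi, rfl⟩
  rw [SetLike.mem_coe, Submodule.mem_comap, (hv i).apply_eq_smul]
  exact Submodule.smul_mem _ _ (Submodule.subset_span (mem_image_of_mem v hi))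

section Eigenbasis

variable {K W ι : Type*} [Field K] [AddCommGroup W] [Module K W] {A : End K W} {b : Basis ι K W}
  {μ : ι → K}

theorem aeval_lagrangeBasis_sum [DecidableEq ι] {v : ι → W} (hv : ∀ i, A.HasEigenvector (μ i) (v i))
    {s : Finset ι} (hμ : InjOn μ s) (c : ι → K) {i : ι} (hi : i ∈ s) :
    Polynomial.aeval A (Lagrange.basis s μ i) (∑ j ∈ s, c j • v j) = c i • v i := by
  simp only [map_sum, map_smul, End.aeval_apply_of_hasEigenvector (hv _)]
  rw [Finset.sum_eq_single_of_mem i hi fun j hj hji => by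
      rw [Lagrange.eval_basis_of_ne hji.symm hj, zero_smul, smul_zero],
    Lagrange.eval_basis_self hμ hi, one_smul]

theorem basis_mem_of_mem_invtSubmodule (hμ : Injective μ)
    (hb : ∀ i, A.HasEigenvector (μ i) (b i)) {p : Submodule K W} (hp : p ∈ A.invtSubmodule)
    {x : W} (hx : x ∈ p) {i : ι} (hi : i ∈ (b.repr x).support) : b i ∈ p := by
  classical
  have hproj : Polynomial.aeval A (Lagrange.basis (b.repr x).support μ i) x =
      b.repr x i • b i := by
    conv_lhs => enter [2]; rw [← b.linearCombination_repr x]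
    exact aeval_lagrangeBasis_sum hb hμ.injOn (b.repr x) hi
  rw [← p.smul_mem_iff (Finsupp.mem_support_iff.1 hi), ← hproj]
  exact Polynomial.aeval_apply_smul_mem_of_le_comap hx _ A hp

theorem span_image_basis_mem_eq (hμ : Injective μ) (hb : ∀ i, A.HasEigenvector (μ i) (b i))
    {p : Submodule K W} (hp : p ∈ A.invtSubmodule) : span K (b '' {i | b i ∈ p}) = p := by
  apply le_antisymm
  · exact Submodule.span_le.2 (image_subset_iff.2 fun _ hi => hi)
  · exact fun x hx => b.mem_span_image.2 fun i hi => basis_mem_of_mem_invtSubmodule hμ hb hp hx hi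

/-- The lattice of invariant subspaces of an endomorphism with an eigenbasis `b` for distinct
eigenvalues: a set `s` of indices corresponds to the span of `b '' s`. -/
def invtSubmoduleOrderIso (hμ : Injective μ) (hb : ∀ i, A.HasEigenvector (μ i) (b i)) :
    Set ι ≃o A.invtSubmodule where
  toFun s := ⟨span K (b '' s), span_image_mem_invtSubmodule hb s⟩
  invFun p := {i | b i ∈ p.1}
  left_inv s := by simp
  right_inv p := Subtype.ext (span_image_basis_mem_eq hμ hb p.2)
  map_rel_iff' := span_image_basis_le_iff b

theorem finrank_invtSubmoduleOrderIso (hμ : Injective μ)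
    (hb : ∀ i, A.HasEigenvector (μ i) (b i)) (s : Set ι) :
    finrank K (invtSubmoduleOrderIso hμ hb s).1 = s.ncard :=
  finrank_span_image_of_linearIndepOn (b.linearIndependent.linearIndepOn s)

/-- Flags of invariant subspaces with prescribed dimensions `d`, as chains of index sets of
cardinalities `d`. -/
def invariantFlagEquiv {κ : Type*} [Preorder κ] (d : κ → ℕ) (hμ : Injective μ)
    (hb : ∀ i, A.HasEigenvector (μ i) (b i)) :
    {S : κ → Set ι // (∀ i, (S i).ncard = d i) ∧ Monotone S} ≃
      {L : κ → Submodule K W //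
        (∀ i, finrank K (L i) = d i) ∧ Monotone L ∧ ∀ i, (L i).map A ≤ L i} where
  toFun S := ⟨fun i => invtSubmoduleOrderIso hμ hb (S.1 i),
    fun i => (finrank_invtSubmoduleOrderIso hμ hb _).trans (S.2.1 i),
    fun _ _ hij => (invtSubmoduleOrderIso hμ hb).monotone (S.2.2 hij),
    fun i => (A.mem_invtSubmodule_iff_map_le).1 (invtSubmoduleOrderIso hμ hb (S.1 i)).2⟩
  invFun L := ⟨fun i => (invtSubmoduleOrderIso hμ hb).symm
      ⟨L.1 i, (A.mem_invtSubmodule_iff_map_le).2 (L.2.2.2 i)⟩,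
    fun i => by rw [← finrank_invtSubmoduleOrderIso hμ hb, OrderIso.apply_symm_apply, L.2.1 i],
    fun _ _ hij => (invtSubmoduleOrderIso hμ hb).symm.monotone (L.2.2.1 hij)⟩
  left_inv S := by simp
  right_inv L := by simp

end Eigenbasis

theorem exists_basis_hasEigenvector {K W ι : Type*} [Field K] [AddCommGroup W] [Module K W]
    [FiniteDimensional K W] [Fintype ι] (hW : finrank K W = Fintype.card ι) {A : End K W}
    {μ : ι → K} (hμ : Injective μ) (hev : ∀ i, A.HasEigenvalue (μ i)) :
    ∃ b : Basis ι K W, ∀ i, A.HasEigenvector (μ i) (b i) := by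
  choose v hv using fun i => (hev i).exists_hasEigenvector
  have hli : LinearIndependent K v := A.eigenvectors_linearIndependent' μ hμ v hv
  exact ⟨basisOfLinearIndependentOfCardEqFinrank' v hli hW.symm, by simpa using hv⟩

theorem card_invariant_complete_flags_general {K W ι : Type*} [Field K] [AddCommGroup W]
    [Module K W] [FiniteDimensional K W] [Fintype ι] (hW : finrank K W = Fintype.card ι)
    (A : End K W) (μ : ι → K) (hμ : Injective μ) (hev : ∀ i, A.HasEigenvalue (μ i)) (k : ℕ) :
    Nat.card {L : Fin k → Submodule K W //
      (∀ i : Fin k, finrank K (L i) = (i : ℕ) + 1) ∧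
      Monotone L ∧
      (∀ i : Fin k, (L i).map A ≤ L i)} = (Fintype.card ι).descFactorial k := by
  obtain ⟨b, hb⟩ := exists_basis_hasEigenvector hW hμ hev
  rw [← Nat.card_congr (invariantFlagEquiv (fun i : Fin k => (i : ℕ) + 1) hμ hb),
    card_chains_ncard_eq_add_one]

/-- The count behind `χ(𝔽_n) = (n+1)!`: an endomorphism of an `(n+1)`-dimensional
complex vector space with `n+1` distinct eigenvalues has exactly `(n+1)!` invariant
complete flags. -/
theorem card_invariant_complete_flags (n : ℕ)
    {W : Type*} [AddCommGroup W] [Module ℂ W] [FiniteDimensional ℂ W]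
    (hW : Module.finrank ℂ W = n + 1)
    (A : Module.End ℂ W)
    (μ : Fin (n + 1) → ℂ) (hμ : Function.Injective μ)
    (hev : ∀ i, A.HasEigenvalue (μ i)) :
    Nat.card {L : Fin n → Submodule ℂ W //
      (∀ i : Fin n, Module.finrank ℂ (L i) = (i : ℕ) + 1) ∧
      Monotone L ∧
      (∀ i : Fin n, (L i).map A ≤ L i)} = Nat.factorial (n + 1) := by
  simpa [← Nat.factorial_mul_descFactorial n.le_succ] using
    card_invariant_complete_flags_general (by simpa using hW) A μ hμ hev n
end
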